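/- arXiv:1101.1827 — 6 statements merged into one kernel-verified Lean document; each statement's English description precedes it below -/
import Mathlib

section
/- Let k, λ ∈ ℝ and let u ∈ C²([0,1], ℝ) satisfy the equation k²(k²u(x)² + u'(x)²)u(x) − ((k²u(x)² + u'(x)²)u'(x))' = λ u(x)³ for all x ∈ [0,1]. Then the function x ↦ 3u'(x)⁴ + 2k²u(x)²u'(x)² − (k⁴ − λ)u(x)⁴ is constant on [0,1]. -/
/-!
The equation is the Euler–Lagrange equation of `L(u, u') = (k²u² + u'²)² - λu⁴`, up to a factor 4.
Since `L` does not depend on `x`, the energy `u' · ∂L/∂u' - L` is conserved, and for this `L` it is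
`3u'⁴ + 2k²u²u'² - (k⁴ - λ)u⁴`. The same argument works for every even `p`.
-/

open Set

section Beltrami

variable {E : Type*} [NormedAddCommGroup E]

-- `p` is the momentum `∂L/∂v` along `(u, v)`, and `hp` is the Euler–Lagrange equation `p' = ∂L/∂u`.
theorem hasDerivWithinAt_beltrami {𝕜 : Type*} [NontriviallyNormedField 𝕜] [NormedSpace 𝕜 E]
    {s : Set 𝕜} {x : 𝕜} {L : E × E → 𝕜} {u v : 𝕜 → E} {p : 𝕜 → E →L[𝕜] 𝕜} {f : E →L[𝕜] 𝕜}
    (hL : HasFDerivAt L (f.coprod (p x)) (u x, v x))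
    (hu : HasDerivWithinAt u (v x) s x) (hv : DifferentiableWithinAt 𝕜 v s x)
    (hp : HasDerivWithinAt p f s x) :
    HasDerivWithinAt (fun y ↦ p y (v y) - L (u y, v y)) 0 s x := by
  have hpv := hp.clm_apply hv.hasDerivWithinAt
  have hLuv := hL.comp_hasDerivWithinAt x (hu.prodMk hv.hasDerivWithinAt)
  refine (hpv.sub hLuv).congr_deriv ?_
  simp only [ContinuousLinearMap.coprod_apply, sub_self]

theorem beltrami_eq_of_convex {𝕜 : Type*} [RCLike 𝕜] [NormedSpace 𝕜 E]
    {s : Set 𝕜} (hs : Convex ℝ s) {L : E × E → 𝕜} {u v : 𝕜 → E} {p f : 𝕜 → E →L[𝕜] 𝕜}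
    (hL : ∀ x ∈ s, HasFDerivAt L ((f x).coprod (p x)) (u x, v x))
    (hu : ∀ x ∈ s, HasDerivWithinAt u (v x) s x) (hv : DifferentiableOn 𝕜 v s)
    (hp : ∀ x ∈ s, HasDerivWithinAt p (f x) s x) {x y : 𝕜} (hx : x ∈ s) (hy : y ∈ s) :
    p x (v x) - L (u x, v x) = p y (v y) - L (u y, v y) := by
  have henergy (z) (hz : z ∈ s) :=
    hasDerivWithinAt_beltrami (hL z hz) (hu z hz) (hv z hz) (hp z hz)
  have hdist := hs.norm_image_sub_le_of_norm_hasDerivWithin_le henergy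
    (fun _ _ ↦ norm_zero.le) hy hx
  rwa [zero_mul, norm_le_zero_iff, sub_eq_zero] at hdist

end Beltrami

section PLaplacian

open ContinuousLinearMap

/-- The squared perturbed gradient `|∇_k u|² = k²u² + u'²` of the `p`-Laplacian, with `v` in the
place of `u'`. -/
def perturbedGradSq {R : Type*} [Semiring R] (k u v : R) : R :=
  k ^ 2 * u ^ 2 + v ^ 2

/-- The Lagrangian `|∇_k u|^p - λ u^p` of the perturbed `p`-Laplacian for `p = 2 (m + 1)`, as a
function of the pair `(u, u')`. Its energy is the first integral, and its Euler–Lagrange equation is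
`p` times the eigenvalue equation. -/
def pLaplacianLagrangian {R : Type*} [Ring R] (m : ℕ) (k lam : R) (z : R × R) : R :=
  perturbedGradSq k z.1 z.2 ^ (m + 1) - lam * z.1 ^ (2 * m + 2)

theorem hasFDerivAt_pLaplacianLagrangian {𝕜 : Type*} [NontriviallyNormedField 𝕜]
    (m : ℕ) (k lam u v : 𝕜) :
    HasFDerivAt (pLaplacianLagrangian m k lam)
      ((toSpanSingleton 𝕜 (2 * (m + 1) *
          (k ^ 2 * perturbedGradSq k u v ^ m * u - lam * u ^ (2 * m + 1)))).coprod
        (toSpanSingleton 𝕜 (2 * (m + 1) * (perturbedGradSq k u v ^ m * v)))) (u, v) := by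
  have hfst : HasFDerivAt Prod.fst (fst 𝕜 𝕜 𝕜) (u, v) := hasFDerivAt_fst
  have hsnd : HasFDerivAt Prod.snd (snd 𝕜 𝕜 𝕜) (u, v) := hasFDerivAt_snd
  have hgrad := ((hfst.pow 2).const_mul (k ^ 2)).add (hsnd.pow 2)
  refine ((hgrad.pow (m + 1)).sub ((hfst.pow (2 * m + 2)).const_mul lam)).congr_fderiv ?_
  refine ContinuousLinearMap.ext fun w ↦ ?_
  simp only [perturbedGradSq, coprod_apply, toSpanSingleton_apply, sub_apply, add_apply,
    smul_apply, coe_fst', coe_snd', Pi.add_apply, smul_eq_mul, nsmul_eq_mul, add_tsub_cancel_right,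
    Nat.add_one_sub_one]
  push_cast
  ring

theorem stmt_3_general {𝕜 : Type*} [RCLike 𝕜] {s : Set 𝕜} (hs : Convex ℝ s) (m : ℕ) (k lam : 𝕜)
    {u v : 𝕜 → 𝕜} (hu : ∀ x ∈ s, HasDerivWithinAt u (v x) s x) (hv : DifferentiableOn 𝕜 v s)
    (heq : ∀ x ∈ s, HasDerivWithinAt (fun y ↦ perturbedGradSq k (u y) (v y) ^ m * v y)
      (k ^ 2 * perturbedGradSq k (u x) (v x) ^ m * u x - lam * u x ^ (2 * m + 1)) s x)
    {x y : 𝕜} (hx : x ∈ s) (hy : y ∈ s) :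
    ((2 * m + 1) * v x ^ 2 - k ^ 2 * u x ^ 2) * perturbedGradSq k (u x) (v x) ^ m
        + lam * u x ^ (2 * m + 2)
      = ((2 * m + 1) * v y ^ 2 - k ^ 2 * u y ^ 2) * perturbedGradSq k (u y) (v y) ^ m
        + lam * u y ^ (2 * m + 2) := by
  have hmomentum (z) (hz : z ∈ s) := (toSpanSingletonCLE : 𝕜 ≃L[𝕜] 𝕜 →L[𝕜] 𝕜)
    |>.hasFDerivAt.comp_hasDerivWithinAt z ((heq z hz).const_mul (2 * (m + 1) : 𝕜))
  have henergy := beltrami_eq_of_convex hs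
    (fun z _ ↦ hasFDerivAt_pLaplacianLagrangian m k lam (u z) (v z)) hu hv hmomentum hx hy
  simp only [toSpanSingleton_apply, smul_eq_mul, pLaplacianLagrangian, perturbedGradSq] at henergy ⊢
  linear_combination henergy

end PLaplacian

/-- First integral for the perturbed `p`-Laplacian with `p = 4`:
if `u ∈ C²([0,1])` satisfies `k²(k²u² + u'²)u − ((k²u² + u'²)u')' = λu³` on `[0,1]`,
then `x ↦ 3u'⁴ + 2k²u²u'² − (k⁴ − λ)u⁴` is constant on `[0,1]`. -/
theorem stmt_3 (k lam : ℝ) (u : ℝ → ℝ) (hu : ContDiff ℝ 2 u)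
    (heq : ∀ x ∈ Icc (0:ℝ) 1,
      k ^ 2 * (k ^ 2 * (u x) ^ 2 + (deriv u x) ^ 2) * u x
        - deriv (fun y : ℝ => (k ^ 2 * (u y) ^ 2 + (deriv u y) ^ 2) * deriv u y) x
        = lam * (u x) ^ 3) :
    ∀ x ∈ Icc (0:ℝ) 1, ∀ y ∈ Icc (0:ℝ) 1,
      3 * (deriv u x) ^ 4 + 2 * k ^ 2 * (u x) ^ 2 * (deriv u x) ^ 2
        - (k ^ 4 - lam) * (u x) ^ 4
      = 3 * (deriv u y) ^ 4 + 2 * k ^ 2 * (u y) ^ 2 * (deriv u y) ^ 2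
        - (k ^ 4 - lam) * (u y) ^ 4 := by
  have hu₁ : Differentiable ℝ u := hu.differentiable two_ne_zero
  have hu₂ : Differentiable ℝ (deriv u) := hu.differentiable_deriv_two
  have hflux : Differentiable ℝ fun y ↦ (k ^ 2 * u y ^ 2 + deriv u y ^ 2) * deriv u y := by
    fun_prop
  have hflux_deriv (z) (hz : z ∈ Icc (0 : ℝ) 1) :
      HasDerivAt (fun y ↦ (k ^ 2 * u y ^ 2 + deriv u y ^ 2) * deriv u y)
        (k ^ 2 * (k ^ 2 * u z ^ 2 + deriv u z ^ 2) * u z - lam * u z ^ 3) z :=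
    (hflux z).hasDerivAt.congr_deriv (by linear_combination -heq z hz)
  intro x hx y hy
  have hconst := stmt_3_general (convex_Icc (0 : ℝ) 1) 1 k lam
    (fun z _ ↦ (hu₁ z).hasDerivAt.hasDerivWithinAt) hu₂.differentiableOn
    (by simpa only [perturbedGradSq, pow_one] using
      fun z hz ↦ (hflux_deriv z hz).hasDerivWithinAt) hx hy
  simp only [perturbedGradSq, Nat.cast_one] at hconst
  linear_combination hconst
end

section
/- Let p > 1, ν ≥ 0, λ ∈ ℝ, and let u ∈ C¹([0,1], ℝ) be not identically zero with u(0) = u(1) = 0. If ∫₀¹ (ν u(x)² + u'(x)²)^{p/2} dx = λ ∫₀¹ |u(x)|^p dx, then ν^{p/2} < λ. -/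
/-!
Pointwise, `ν^(p/2) |u|^p = (ν u²)^(p/2) ≤ (ν u² + u'²)^(p/2)`, strictly wherever `u' ≠ 0`. A
nonconstant `u` has such a point, so, both sides being continuous, integrating gives
`ν^(p/2) ∫ |u|^p < ∫ (ν u² + u'²)^(p/2) = λ ∫ |u|^p`, and the nonnegative factor `∫ |u|^p` cancels.
-/

open MeasureTheory Set

section

variable {E F : Type*} [NormedAddCommGroup E] [NormedAddCommGroup F]
  {a b c p ν : ℝ}

theorem rpow_div_two_mul_rpow {r : ℝ} (hν : 0 ≤ ν) (hr : 0 ≤ r) :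
    ν ^ (p / 2) * r ^ p = (ν * r ^ 2) ^ (p / 2) := by
  rw [Real.mul_rpow hν (sq_nonneg r), ← Real.rpow_natCast_mul hr, Nat.cast_ofNat,
    mul_div_cancel₀ p two_ne_zero]

theorem continuousOn_mul_norm_sq_add_norm_sq_rpow {X : Type*} [TopologicalSpace X] {s : Set X}
    {f : X → E} {g : X → F} (hp : 0 ≤ p) (hf : ContinuousOn f s) (hg : ContinuousOn g s) :
    ContinuousOn (fun x ↦ (ν * ‖f x‖ ^ 2 + ‖g x‖ ^ 2) ^ (p / 2)) s :=
  ContinuousOn.rpow_const (by fun_prop) fun _ _ ↦ Or.inr (by positivity)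

theorem mul_integral_norm_rpow_lt_integral_rpow {f : ℝ → E} {g : ℝ → F}
    (hp : 0 < p) (hν : 0 ≤ ν) (hab : a < b)
    (hf : ContinuousOn f (Icc a b)) (hg : ContinuousOn g (Icc a b))
    (hc : c ∈ Icc a b) (hgc : g c ≠ 0) :
    ν ^ (p / 2) * ∫ x in a..b, ‖f x‖ ^ p
      < ∫ x in a..b, (ν * ‖f x‖ ^ 2 + ‖g x‖ ^ 2) ^ (p / 2) := by
  have hp2 : 0 < p / 2 := half_pos hp
  rw [← intervalIntegral.integral_const_mul]
  refine intervalIntegral.integral_lt_integral_of_continuousOn_of_le_of_exists_lt hab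
    (continuousOn_const.mul (hf.norm.rpow_const fun _ _ ↦ Or.inr hp.le))
    (continuousOn_mul_norm_sq_add_norm_sq_rpow hp.le hf hg) (fun x _ ↦ ?_) ⟨c, hc, ?_⟩
  · rw [rpow_div_two_mul_rpow hν (norm_nonneg (f x))]
    exact Real.rpow_le_rpow (by positivity) (le_add_of_nonneg_right (sq_nonneg _)) hp2.le
  · rw [rpow_div_two_mul_rpow hν (norm_nonneg (f c))]
    exact Real.rpow_lt_rpow (by positivity) (lt_add_of_pos_right _ (by positivity)) hp2

variable [NormedSpace ℝ E]

theorem exists_hasDerivWithinAt_ne_zero {u u' : ℝ → E}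
    (hu : ∀ x ∈ Icc a b, HasDerivWithinAt u (u' x) (Icc a b) x)
    (hne : ∃ x ∈ Icc a b, u x ≠ u a) : ∃ c ∈ Icc a b, u' c ≠ 0 := by
  contrapose! hne
  refine constant_of_derivWithin_zero (fun x hx ↦ (hu x hx).differentiableWithinAt) fun x hx ↦ ?_
  have hxI : x ∈ Icc a b := Ico_subset_Icc_self hx
  rw [(hu x hxI).derivWithin (uniqueDiffOn_Icc (hx.1.trans_lt hx.2) x hxI), hne x hxI]

theorem stmt_12_general {u u' : ℝ → E} {lam : ℝ} (hp : 0 < p) (hν : 0 ≤ ν)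
    (hu : ∀ x ∈ Icc a b, HasDerivWithinAt u (u' x) (Icc a b) x)
    (hu' : ContinuousOn u' (Icc a b)) (hne : ∃ x ∈ Icc a b, u x ≠ u a)
    (heq : ∫ x in a..b, (ν * ‖u x‖ ^ 2 + ‖u' x‖ ^ 2) ^ (p / 2)
      = lam * ∫ x in a..b, ‖u x‖ ^ p) :
    ν ^ (p / 2) < lam := by
  obtain ⟨c, hc, hu'c⟩ := exists_hasDerivWithinAt_ne_zero hu hne
  have hab : a < b := by
    obtain ⟨x, hx, hux⟩ := hne
    exact (hx.1.lt_of_ne' (ne_of_apply_ne u hux)).trans_le hx.2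
  have hlt : ν ^ (p / 2) * ∫ x in a..b, ‖u x‖ ^ p < lam * ∫ x in a..b, ‖u x‖ ^ p :=
    heq ▸ mul_integral_norm_rpow_lt_integral_rpow hp hν hab
      (HasDerivWithinAt.continuousOn hu) hu' hc hu'c
  exact lt_of_mul_lt_mul_right hlt
    (intervalIntegral.integral_nonneg hab.le fun x _ ↦ by positivity)

end

/-- Let `p > 1`, `ν ≥ 0`, and let `u ∈ C¹([0,1])` be not identically
zero with `u(0) = u(1) = 0`. If `∫₀¹ (νu² + u'²)^(p/2) = λ ∫₀¹ |u|^p`, then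
`ν^(p/2) < λ`. -/
theorem stmt_12 (p nu lam : ℝ) (hp : 1 < p) (hnu : 0 ≤ nu)
    (u : ℝ → ℝ) (hu : ContDiff ℝ 1 u)
    (hne : ∃ x ∈ Icc (0:ℝ) 1, u x ≠ 0)
    (h0 : u 0 = 0) (h1 : u 1 = 0)
    (heq : (∫ x in (0:ℝ)..1, (nu * (u x) ^ 2 + (deriv u x) ^ 2) ^ (p / 2))
      = lam * ∫ x in (0:ℝ)..1, |u x| ^ p) :
    nu ^ (p / 2) < lam :=
  stmt_12_general (zero_lt_one.trans hp) hnu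
    (fun x _ ↦ (hu.differentiable one_ne_zero x).hasDerivAt.hasDerivWithinAt)
    (hu.continuous_deriv le_rfl).continuousOn (by rwa [h0])
    (by simpa only [Real.norm_eq_abs, sq_abs] using heq)
end

section
/- Let p > 1 and let u ∈ C¹([0,1], ℝ) be not identically zero with u(0) = u(1) = 0. Let λ ∈ ℝ satisfy λ ∫₀¹ |u(x)|^p dx > ∫₀¹ |u'(x)|^p dx. Then there exists a unique ν > 0 such that ∫₀¹ (ν u(x)² + u'(x)²)^{p/2} dx = λ ∫₀¹ |u(x)|^p dx; moreover this ν satisfies ν < λ^{2/p}. -/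
open MeasureTheory Set

/-!
Put `F ν = ∫ (ν ‖f‖² + ‖g‖²) ^ (p / 2)` for `f, g ∈ L^p`. On `[0, ∞)` the function `F` is continuous
by dominated convergence, and strictly increasing as soon as `f` is not a.e. zero. The level
`c = λ ∫ ‖f‖ ^ p` lies strictly between `F 0 = ∫ ‖g‖ ^ p` and `F (λ ^ (2 / p))`: the second
inequality drops the term `‖g‖²`, which is a strict loss because `g` is not a.e. zero. The
intermediate value theorem and strict monotonicity give the unique root. For `g = u'` the condition
on `g` holds because `u`, which vanishes at `0` but not identically, is not constant.
-/

theorem rpow_mul_sq_add_sq_le {p ν a b : ℝ} (hp : 0 ≤ p) (hν : 0 ≤ ν) (ha : 0 ≤ a) (hb : 0 ≤ b) :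
    (ν * a ^ 2 + b ^ 2) ^ (p / 2) ≤ (√ν * a + b) ^ p := by
  rw [Real.rpow_div_two_eq_sqrt p (by positivity)]
  refine Real.rpow_le_rpow (Real.sqrt_nonneg _) ?_ hp
  rw [Real.sqrt_le_left (by positivity), add_sq, mul_pow, Real.sq_sqrt hν]
  have : 0 ≤ 2 * (√ν * a) * b := by positivity
  linarith

theorem sq_rpow_div_two {a : ℝ} (p : ℝ) (ha : 0 ≤ a) : (a ^ 2) ^ (p / 2) = a ^ p := by
  rw [Real.rpow_div_two_eq_sqrt p (sq_nonneg a), Real.sqrt_sq ha]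

section Energy

variable {α E F : Type*} [MeasurableSpace α] [NormedAddCommGroup E] [NormedAddCommGroup F]
  {μ : Measure α} {p ν : ℝ} {f : α → E} {g : α → F}

theorem integral_rpow_lt_integral_rpow {q : ℝ} {φ ψ : α → ℝ} (hq : 0 < q) (hφ : 0 ≤ φ) (hle : φ ≤ ψ)
    (hne : ¬ φ =ᵐ[μ] ψ) (hφi : Integrable (fun x ↦ φ x ^ q) μ)
    (hψi : Integrable (fun x ↦ ψ x ^ q) μ) :
    ∫ x, φ x ^ q ∂μ < ∫ x, ψ x ^ q ∂μ := by
  have hpow (x : α) : φ x ^ q ≤ ψ x ^ q := Real.rpow_le_rpow (hφ x) (hle x) hq.le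
  refine (integral_mono hφi hψi hpow).lt_of_ne fun heq ↦ hne ?_
  filter_upwards [(integral_eq_iff_of_ae_le hφi hψi (.of_forall hpow)).1 heq] with x hx
  exact (Real.rpow_left_inj (hφ x) ((hφ x).trans (hle x)) hq.ne').1 hx

/-- The integral `∫ (ν ‖f‖² + ‖g‖²) ^ (p / 2)` as a function of `ν`. With `f = u` and `g = u'` it is
the left-hand side of the equation that defines the root functional `r_λ(u) = ν`. -/
noncomputable def mixedEnergy (μ : Measure α) (p : ℝ) (f : α → E) (g : α → F) (ν : ℝ) : ℝ :=
  ∫ x, (ν * ‖f x‖ ^ 2 + ‖g x‖ ^ 2) ^ (p / 2) ∂μ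

theorem mixedEnergy_zero : mixedEnergy μ p f g 0 = ∫ x, ‖g x‖ ^ p ∂μ := by
  simp only [mixedEnergy, zero_mul, zero_add, sq_rpow_div_two p (norm_nonneg _)]

theorem aestronglyMeasurable_mixedEnergy_integrand (hf : AEStronglyMeasurable f μ)
    (hg : AEStronglyMeasurable g μ) :
    AEStronglyMeasurable (fun x ↦ (ν * ‖f x‖ ^ 2 + ‖g x‖ ^ 2) ^ (p / 2)) μ := by
  have hf' := hf.norm.aemeasurable
  have hg' := hg.norm.aemeasurable
  exact AEMeasurable.aestronglyMeasurable (by fun_prop)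

theorem integrable_mixedEnergy_integrand (hp : 0 < p) (hf : MemLp f (.ofReal p) μ)
    (hg : MemLp g (.ofReal p) μ) (hν : 0 ≤ ν) :
    Integrable (fun x ↦ (ν * ‖f x‖ ^ 2 + ‖g x‖ ^ 2) ^ (p / 2)) μ := by
  have hsum : MemLp (fun x ↦ √ν * ‖f x‖ + ‖g x‖) (.ofReal p) μ := (hf.norm.const_mul √ν).add hg.norm
  have hdom := hsum.integrable_norm_rpow (ENNReal.ofReal_pos.2 hp).ne' ENNReal.ofReal_ne_top
  rw [ENNReal.toReal_ofReal hp.le] at hdom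
  refine hdom.mono' (aestronglyMeasurable_mixedEnergy_integrand hf.1 hg.1) (.of_forall fun x ↦ ?_)
  rw [Real.norm_of_nonneg (by positivity), Real.norm_of_nonneg (by positivity)]
  exact rpow_mul_sq_add_sq_le hp.le hν (norm_nonneg _) (norm_nonneg _)

theorem continuousOn_mixedEnergy (hp : 0 < p) (hf : MemLp f (.ofReal p) μ)
    (hg : MemLp g (.ofReal p) μ) : ContinuousOn (mixedEnergy μ p f g) (Ici 0) := by
  intro ν (hν : 0 ≤ ν)
  refine continuousWithinAt_of_dominated
    (.of_forall fun _ ↦ aestronglyMeasurable_mixedEnergy_integrand hf.1 hg.1) ?_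
    (integrable_mixedEnergy_integrand hp hf hg (ν := ν + 1) (by positivity))
    (.of_forall fun x ↦ ?_)
  · filter_upwards [self_mem_nhdsWithin, mem_nhdsWithin_of_mem_nhds (Iic_mem_nhds (lt_add_one ν))]
      with t (ht : 0 ≤ t) (htν : t ≤ ν + 1)
    refine .of_forall fun x ↦ ?_
    rw [Real.norm_of_nonneg (by positivity)]
    gcongr
  · exact ContinuousWithinAt.rpow_const (by fun_prop) (.inr (by positivity))

theorem strictMonoOn_mixedEnergy (hp : 0 < p) (hf : MemLp f (.ofReal p) μ)
    (hg : MemLp g (.ofReal p) μ) (hf₀ : ¬ f =ᵐ[μ] 0) :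
    StrictMonoOn (mixedEnergy μ p f g) (Ici 0) := by
  intro s (hs : 0 ≤ s) t (ht : 0 ≤ t) hst
  refine integral_rpow_lt_integral_rpow (half_pos hp) (fun x ↦ by dsimp; positivity)
    (fun x ↦ by dsimp; gcongr) (fun heq ↦ hf₀ ?_) (integrable_mixedEnergy_integrand hp hf hg hs)
    (integrable_mixedEnergy_integrand hp hf hg ht)
  filter_upwards [heq] with x hx
  simpa [hst.ne] using hx

theorem rpow_mul_integral_lt_mixedEnergy (hp : 0 < p) (hf : MemLp f (.ofReal p) μ)
    (hg : MemLp g (.ofReal p) μ) (hg₀ : ¬ g =ᵐ[μ] 0) (hν : 0 ≤ ν) :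
    ν ^ (p / 2) * ∫ x, ‖f x‖ ^ p ∂μ < mixedEnergy μ p f g ν := by
  have hpow (x : α) : ν ^ (p / 2) * ‖f x‖ ^ p = (ν * ‖f x‖ ^ 2) ^ (p / 2) := by
    rw [Real.mul_rpow hν (sq_nonneg _), sq_rpow_div_two p (norm_nonneg _)]
  have hint : Integrable (fun x ↦ (ν * ‖f x‖ ^ 2) ^ (p / 2)) μ := by
    simpa using integrable_mixedEnergy_integrand hp hf (MemLp.zero (ε := F)) hν
  simp_rw [← integral_const_mul, hpow]
  refine integral_rpow_lt_integral_rpow (half_pos hp) (fun x ↦ by dsimp; positivity)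
    (fun x ↦ le_add_of_nonneg_right (by positivity)) (fun heq ↦ hg₀ ?_) hint
    (integrable_mixedEnergy_integrand hp hf hg hν)
  filter_upwards [heq] with x hx
  simpa using hx

theorem not_ae_eq_zero_of_integral_norm_rpow_ne_zero (hp : p ≠ 0)
    (h : ∫ x, ‖f x‖ ^ p ∂μ ≠ 0) : ¬ f =ᵐ[μ] 0 := by
  refine fun hf ↦ h (integral_eq_zero_of_ae ?_)
  filter_upwards [hf] with x hx
  simp [hx, hp]

theorem stmt_14_general {lam : ℝ} (hp : 0 < p) (hf : MemLp f (.ofReal p) μ)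
    (hg : MemLp g (.ofReal p) μ) (hg₀ : ¬ g =ᵐ[μ] 0)
    (hlam : ∫ x, ‖g x‖ ^ p ∂μ < lam * ∫ x, ‖f x‖ ^ p ∂μ) :
    ∃ ν : ℝ, (0 < ν ∧ mixedEnergy μ p f g ν = lam * ∫ x, ‖f x‖ ^ p ∂μ ∧ ν < lam ^ (2 / p)) ∧
      ∀ ν' : ℝ, 0 < ν' → mixedEnergy μ p f g ν' = lam * ∫ x, ‖f x‖ ^ p ∂μ → ν' = ν := by
  have hg_nonneg : 0 ≤ ∫ x, ‖g x‖ ^ p ∂μ := by positivity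
  have hf_nonneg : 0 ≤ ∫ x, ‖f x‖ ^ p ∂μ := by positivity
  have hlevel := hg_nonneg.trans_lt hlam
  have hlam_pos : 0 < lam := pos_of_mul_pos_left hlevel hf_nonneg
  have hf₀ := not_ae_eq_zero_of_integral_norm_rpow_ne_zero hp.ne' (right_ne_zero_of_mul hlevel.ne')
  have hL : 0 ≤ lam ^ (2 / p) := by positivity
  have hbot : mixedEnergy μ p f g 0 < lam * ∫ x, ‖f x‖ ^ p ∂μ := by rwa [mixedEnergy_zero]
  have htop := rpow_mul_integral_lt_mixedEnergy hp hf hg hg₀ hL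
  rw [← inv_div p 2, Real.rpow_inv_rpow hlam_pos.le (half_pos hp).ne', inv_div] at htop
  obtain ⟨ν, hν, hroot⟩ :=
    intermediate_value_Ioo hL ((continuousOn_mixedEnergy hp hf hg).mono Icc_subset_Ici_self)
      ⟨hbot, htop⟩
  exact ⟨ν, ⟨hν.1, hroot, hν.2⟩, fun ν' hν' h ↦
    (strictMonoOn_mixedEnergy hp hf hg hf₀).injOn hν'.le hν.1.le (h.trans hroot.symm)⟩

end Energy

theorem memLp_restrict_of_continuousOn_of_isCompact {X E : Type*} [TopologicalSpace X] [T2Space X]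
    [MeasurableSpace X] [OpensMeasurableSpace X] [NormedAddCommGroup E]
    {μ : Measure X} [IsFiniteMeasureOnCompacts μ] {f : X → E} {K : Set X} (hf : ContinuousOn f K)
    (hK : IsCompact K) (q : ENNReal) : MemLp f q (μ.restrict K) := by
  have : IsFiniteMeasure (μ.restrict K) := ⟨by simpa using hK.measure_lt_top⟩
  obtain ⟨C, hC⟩ := hK.exists_bound_of_continuousOn hf
  exact .of_bound (hf.aestronglyMeasurable_of_isCompact hK hK.measurableSet) C
    (ae_restrict_of_forall_mem hK.measurableSet hC)

theorem not_deriv_ae_eq_zero_of_ne {E : Type*} [NormedAddCommGroup E] [NormedSpace ℝ E]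
    {u : ℝ → E} {a b x : ℝ} (hu : ContDiff ℝ 1 u) (hx : x ∈ Icc a b) (hne : u x ≠ u a) :
    ¬ deriv u =ᵐ[volume.restrict (Icc a b)] 0 := by
  intro hae
  have hab : a ≠ b := by
    rintro rfl
    exact hne (congrArg u (by simpa only [Icc_self, mem_singleton_iff] using hx))
  have hderiv : EqOn (deriv u) 0 (Icc a b) :=
    Measure.eqOn_Icc_of_ae_eq volume hab hae (hu.continuous_deriv le_rfl).continuousOn
      continuousOn_const
  refine hne (constant_of_has_deriv_right_zero hu.continuous.continuousOn (fun y hy ↦ ?_) x hx)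
  simpa only [hderiv (Ico_subset_Icc_self hy)] using!
    (hu.differentiable one_ne_zero y).hasDerivAt.hasDerivWithinAt (s := Ici y)

/-- Let `p > 1`, `u ∈ C¹([0,1])` not identically zero with
`u(0) = u(1) = 0`, and `λ` with `λ∫₀¹|u|^p > ∫₀¹|u'|^p`. Then there is a unique `ν > 0`
with `∫₀¹ (νu² + u'²)^(p/2) = λ∫₀¹|u|^p`, and this `ν` satisfies `ν < λ^(2/p)`. -/
theorem stmt_14 (p lam : ℝ) (hp : 1 < p)
    (u : ℝ → ℝ) (hu : ContDiff ℝ 1 u)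
    (hne : ∃ x ∈ Icc (0:ℝ) 1, u x ≠ 0)
    (h0 : u 0 = 0) (h1 : u 1 = 0)
    (hlam : (∫ x in (0:ℝ)..1, |deriv u x| ^ p) < lam * ∫ x in (0:ℝ)..1, |u x| ^ p) :
    ∃ nu : ℝ, (0 < nu ∧
        (∫ x in (0:ℝ)..1, (nu * (u x) ^ 2 + (deriv u x) ^ 2) ^ (p / 2))
          = lam * ∫ x in (0:ℝ)..1, |u x| ^ p ∧
        nu < lam ^ (2 / p)) ∧
      ∀ nu' : ℝ, 0 < nu' →
        (∫ x in (0:ℝ)..1, (nu' * (u x) ^ 2 + (deriv u x) ^ 2) ^ (p / 2))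
          = lam * ∫ x in (0:ℝ)..1, |u x| ^ p → nu' = nu := by
  obtain ⟨x, hx, hux⟩ := hne
  simp only [intervalIntegral.integral_of_le zero_le_one, ← integral_Icc_eq_integral_Ioc] at hlam ⊢
  simpa only [mixedEnergy, Real.norm_eq_abs, sq_abs] using stmt_14_general (zero_lt_one.trans hp)
    (memLp_restrict_of_continuousOn_of_isCompact hu.continuous.continuousOn isCompact_Icc _)
    (memLp_restrict_of_continuousOn_of_isCompact (hu.continuous_deriv le_rfl).continuousOn
      isCompact_Icc _) (not_deriv_ae_eq_zero_of_ne hu hx (by rwa [h0])) hlam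
end

section
/- Let p ≥ 2, λ ∈ ℝ, and let u, v ∈ C¹([0,1], ℝ) with u not identically zero. Let ε > 0 and let g : (−ε, ε) → (0, ∞) be differentiable at 0, and suppose that for all t ∈ (−ε, ε), ∫₀¹ (g(t)(u(x)+tv(x))² + (u'(x)+tv'(x))²)^{p/2} dx = λ ∫₀¹ |u(x)+tv(x)|^p dx. Set ν := g(0). Then g'(0) = 2·[λ ∫₀¹ |u|^{p−2} u v dx − ν ∫₀¹ (νu² + u'²)^{(p−2)/2} u v dx − ∫₀¹ (νu² + u'²)^{(p−2)/2} u' v' dx] / ∫₀¹ (νu² + u'²)^{(p−2)/2} u² dx. -/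
open MeasureTheory Set

/-!
With `∇_r u = (√r u, ∇u)`, the integrand `(r u² + |∇u|²)^(p/2)` is `‖∇_r u‖^p`, and `ξ ↦ ‖ξ‖^p` is
`C¹` for every `p > 1`. Both sides of the defining equation are thus integrals of a `C¹` function
of finitely many real parameters (`√r` and `t`) and of continuous functions on a compact set. They
are differentiable in the parameters jointly, so along a curve of parameters it is enough that the
curve be differentiable at the one point `0`. Comparing the two derivatives at `0` gives a linear
equation for `g'(0)`, whose leading coefficient `∫ |∇_ν u|^(p-2) u²` is positive because `ν > 0`.
-/

open Filter Topology Gradient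
open scoped RealInnerProductSpace

section ParametricIntegral

variable {X P W F : Type*} [TopologicalSpace X] [MeasurableSpace X] [OpensMeasurableSpace X]
  {μ : Measure X} [IsFiniteMeasureOnCompacts μ] {K : Set X}
  [NormedAddCommGroup P] [NormedSpace ℝ P] [NormedAddCommGroup W] [NormedSpace ℝ W]
  [NormedAddCommGroup F]

lemma exists_eventually_forall_norm_le_of_isCompact {Y Z : Type*} [TopologicalSpace Y]
    [TopologicalSpace Z] {S : Set Z} (hS : IsCompact S) {f : Y × Z → F} (hf : Continuous f)
    (y₀ : Y) : ∃ C, ∀ᶠ y in 𝓝 y₀, ∀ z ∈ S, ‖f (y, z)‖ ≤ C := by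
  obtain ⟨C, hC⟩ := hS.exists_bound_of_continuousOn
    (f := fun z => f (y₀, z)) (by fun_prop)
  refine ⟨C + 1, hS.eventually_forall_of_forall_eventually fun z hz => ?_⟩
  have hlt : ‖f (y₀, z)‖ < C + 1 := (hC z hz).trans_lt (lt_add_one C)
  filter_upwards [hf.norm.continuousAt.eventually_lt_const hlt] with q hq using hq.le

variable [NormedSpace ℝ F]

theorem hasFDerivAt_setIntegral_comp_of_contDiff (hK : IsCompact K) (hKm : MeasurableSet K)
    {f : P × W → F} (hf : ContDiff ℝ 1 f) {w : X → W} (hw : ContinuousOn w K) (z₀ : P) :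
    HasFDerivAt (fun z => ∫ x in K, f (z, w x) ∂μ)
      (∫ x in K, (fderiv ℝ f (z₀, w x)).comp (.inl ℝ P W) ∂μ) z₀ := by
  have hf' : Continuous (fun y => (fderiv ℝ f y).comp (.inl ℝ P W)) :=
    (hf.continuous_fderiv one_ne_zero).clm_comp continuous_const
  have continuousOn_pair (z : P) : ContinuousOn (fun x => (z, w x)) K :=
    continuousOn_const.prodMk hw
  have continuousOn_integrand (z : P) : ContinuousOn (fun x => f (z, w x)) K :=
    hf.continuous.comp_continuousOn (continuousOn_pair z)
  obtain ⟨C, hC⟩ := exists_eventually_forall_norm_le_of_isCompact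
    (hK.image_of_continuousOn hw) hf' z₀
  refine hasFDerivAt_integral_of_dominated_of_fderiv_le
    (F' := fun z x => (fderiv ℝ f (z, w x)).comp (.inl ℝ P W)) (bound := fun _ => C) hC
    (.of_forall fun z => (continuousOn_integrand z).aestronglyMeasurable_of_isCompact hK hKm)
    ((continuousOn_integrand z₀).integrableOn_compact' hK hKm)
    ((hf'.comp_continuousOn (continuousOn_pair z₀)).aestronglyMeasurable_of_isCompact hK hKm)
    ?_ (integrableOn_const hK.measure_ne_top) (.of_forall fun x z _ => ?_)
  · filter_upwards [ae_restrict_mem hKm] with x hx z hz using hz _ (mem_image_of_mem w hx)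
  · exact (hf.differentiable one_ne_zero _).hasFDerivAt.comp z (hasFDerivAt_prodMk_left z (w x))

theorem hasDerivAt_setIntegral_comp_of_contDiff [CompleteSpace F] (hK : IsCompact K)
    (hKm : MeasurableSet K) {f : P × W → F} (hf : ContDiff ℝ 1 f) {w : X → W}
    (hw : ContinuousOn w K) {γ : ℝ → P} {t₀ : ℝ} (hγ : DifferentiableAt ℝ γ t₀) {f' : X → F}
    (hf' : ∀ x ∈ K, HasDerivAt (fun t => f (γ t, w x)) (f' x) t₀) :
    HasDerivAt (fun t => ∫ x in K, f (γ t, w x) ∂μ) (∫ x in K, f' x ∂μ) t₀ := by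
  have hchain := (hasFDerivAt_setIntegral_comp_of_contDiff (μ := μ) hK hKm hf hw
    (γ t₀)).comp_hasDerivAt t₀ hγ.hasDerivAt
  refine hchain.congr_deriv ?_
  have hint : IntegrableOn (fun x => (fderiv ℝ f (γ t₀, w x)).comp (.inl ℝ P W)) K μ :=
    (((hf.continuous_fderiv one_ne_zero).comp_continuousOn
      (continuousOn_const.prodMk hw)).clm_comp continuousOn_const).integrableOn_compact' hK hKm
  rw [ContinuousLinearMap.integral_apply hint]
  refine setIntegral_congr_fun hKm fun x hx => ?_
  have hcurve := (hf.differentiable one_ne_zero (γ t₀, w x)).hasFDerivAt.comp_hasDerivAt t₀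
    (hγ.hasDerivAt.prodMk (hasDerivAt_const t₀ (w x)))
  exact hcurve.unique (hf' x hx)

end ParametricIntegral

section NormRpow

variable {F : Type*} [NormedAddCommGroup F] [InnerProductSpace ℝ F]

lemma hasDerivAt_norm_rpow_comp {p : ℝ} (hp : 1 < p) {f : ℝ → F} {f' : F} {t : ℝ}
    (hf : HasDerivAt f f' t) :
    HasDerivAt (fun s => ‖f s‖ ^ p) (p * (‖f t‖ ^ (p - 2) * ⟪f t, f'⟫)) t := by
  refine ((hasFDerivAt_norm_rpow (f t) hp).comp_hasDerivAt t hf).congr_deriv ?_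
  simp [mul_assoc]

-- For `p < 2` the factor `‖y.1‖ ^ (p - 2)` alone is unbounded near `0`.
lemma continuous_norm_rpow_mul_inner {p : ℝ} (hp : 1 < p) :
    Continuous fun y : F × F => ‖y.1‖ ^ (p - 2) * ⟪y.1, y.2⟫ := by
  have hfderiv := ((contDiff_norm_rpow (E := F) hp).continuous_fderiv_apply one_ne_zero).const_smul
    p⁻¹
  refine hfderiv.congr fun y => ?_
  have hp0 : p ≠ 0 := by positivity
  simp [fderiv_norm_rpow _ hp, mul_assoc, hp0]

end NormRpow

/-- With `a = u x` and `ξ = ∇u x`, this is the vector `∇_r u = (√r u, ∇u)` at `x`, whose squared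
Euclidean norm is `r u² + |∇u|²` for `r ≥ 0`. -/
noncomputable def augmentedGrad {E : Type*} (r a : ℝ) (ξ : E) : WithLp 2 (ℝ × E) :=
  WithLp.toLp 2 (√r * a, ξ)

namespace augmentedGrad

lemma ne_zero {E : Type*} [AddCommGroup E] {r a : ℝ} (hr : 0 < r) (ha : a ≠ 0) (ξ : E) :
    augmentedGrad r a ξ ≠ 0 := by
  intro h
  have hfst : √r * a = 0 := congrArg (fun y : WithLp 2 (ℝ × E) => y.fst) h
  exact mul_ne_zero (Real.sqrt_pos.2 hr).ne' ha hfst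

section Algebra

variable {E : Type*} [NormedAddCommGroup E] [InnerProductSpace ℝ E] {r : ℝ}

lemma inner_eq (hr : 0 ≤ r) (a b : ℝ) (ξ η : E) :
    ⟪augmentedGrad r a ξ, augmentedGrad r b η⟫ = r * (a * b) + ⟪ξ, η⟫ := by
  simp only [augmentedGrad, WithLp.prod_inner_apply, Real.inner_apply]
  linear_combination (a * b) * Real.mul_self_sqrt hr

lemma norm_rpow (hr : 0 ≤ r) (q a : ℝ) (ξ : E) :
    ‖augmentedGrad r a ξ‖ ^ q = (r * a ^ 2 + ‖ξ‖ ^ 2) ^ (q / 2) := by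
  have hsq : r * a ^ 2 + ‖ξ‖ ^ 2 = ‖augmentedGrad r a ξ‖ ^ 2 := by
    rw [← real_inner_self_eq_norm_sq (augmentedGrad r a ξ), inner_eq hr,
      real_inner_self_eq_norm_sq, sq a]
  rw [hsq, ← Real.rpow_natCast_mul (norm_nonneg _)]
  congr 1
  push_cast
  ring

lemma hasDerivAt_line {g : ℝ → ℝ} {g' : ℝ} (hg : HasDerivAt g g' 0) (hg0 : 0 < g 0) (a b : ℝ)
    (ξ η : E) :
    HasDerivAt (fun t => augmentedGrad (g t) (a + t * b) (ξ + t • η))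
      (augmentedGrad (g 0) (g' / (2 * g 0) * a + b) η) 0 := by
  have hfst : HasDerivAt (fun t => √(g t) * (a + t * b)) (√(g 0) * (g' / (2 * g 0) * a + b)) 0 := by
    refine ((hg.sqrt hg0.ne').mul
      (((hasDerivAt_id (0 : ℝ)).mul_const b).const_add a)).congr_deriv ?_
    have hsqrt : √(g 0) ≠ 0 := (Real.sqrt_pos.2 hg0).ne'
    have hsq : √(g 0) ^ 2 = g 0 := Real.sq_sqrt hg0.le
    simp only [id_eq, zero_mul, add_zero, one_mul]
    field_simp
    rw [hsq]
    ring
  have hsnd : HasDerivAt (fun t : ℝ => ξ + t • η) η 0 := by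
    simpa using ((hasDerivAt_id (0 : ℝ)).smul_const η).const_add ξ
  exact (WithLp.prodContinuousLinearEquiv 2 ℝ ℝ E).symm.hasFDerivAt.comp_hasDerivAt 0
    (hfst.prodMk hsnd)

end Algebra

section Integral

variable {X E : Type*} [TopologicalSpace X] [NormedAddCommGroup E] [InnerProductSpace ℝ E]
  {K : Set X} {p r : ℝ} {a b : X → ℝ} {ξ η : X → E}

lemma continuousOn_norm_rpow_mul_inner (hp : 1 < p) (hr : 0 ≤ r) (ha : ContinuousOn a K)
    (hb : ContinuousOn b K) (hξ : ContinuousOn ξ K) (hη : ContinuousOn η K) :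
    ContinuousOn (fun x => ‖augmentedGrad r (a x) (ξ x)‖ ^ (p - 2) *
      (r * (a x * b x) + ⟪ξ x, η x⟫)) K := by
  have hcont {c : X → ℝ} {ζ : X → E} (hc : ContinuousOn c K) (hζ : ContinuousOn ζ K) :
      ContinuousOn (fun x => augmentedGrad r (c x) (ζ x)) K :=
    (WithLp.prod_continuous_toLp 2 ℝ E).comp_continuousOn
      ((continuousOn_const.mul hc).prodMk hζ)
  simpa only [Function.comp_def, inner_eq hr] using
    (continuous_norm_rpow_mul_inner hp).comp_continuousOn ((hcont ha hξ).prodMk (hcont hb hη))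

variable [MeasurableSpace X] [OpensMeasurableSpace X] {μ : Measure X}
  [IsFiniteMeasureOnCompacts μ]

lemma integrableOn_norm_rpow_mul_mul (hK : IsCompact K) (hKm : MeasurableSet K) (hp : 1 < p)
    (hr : 0 < r) (ha : ContinuousOn a K) (hb : ContinuousOn b K) (hξ : ContinuousOn ξ K) :
    IntegrableOn (fun x => ‖augmentedGrad r (a x) (ξ x)‖ ^ (p - 2) * (a x * b x)) K μ := by
  have hint := ((continuousOn_norm_rpow_mul_inner hp hr.le ha hb hξ
    (continuousOn_const (c := 0))).integrableOn_compact' hK hKm (μ := μ)).const_mul r⁻¹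
  refine hint.congr (.of_forall fun x => ?_)
  simp only [inner_zero_right, add_zero]
  field_simp

lemma integrableOn_norm_rpow_mul_inner (hK : IsCompact K) (hKm : MeasurableSet K) (hp : 1 < p)
    (hr : 0 ≤ r) (ha : ContinuousOn a K) (hξ : ContinuousOn ξ K) (hη : ContinuousOn η K) :
    IntegrableOn (fun x => ‖augmentedGrad r (a x) (ξ x)‖ ^ (p - 2) * ⟪ξ x, η x⟫) K μ := by
  simpa using (continuousOn_norm_rpow_mul_inner hp hr ha (continuousOn_const (c := 0)) hξ
    hη).integrableOn_compact' hK hKm (μ := μ)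

lemma setIntegral_norm_rpow_mul_sq_pos (hK : IsCompact K) (hKm : MeasurableSet K) (hp : 1 < p)
    (hr : 0 < r) (ha : ContinuousOn a K) (hξ : ContinuousOn ξ K)
    (hne : ¬ a =ᵐ[μ.restrict K] 0) :
    0 < ∫ x in K, ‖augmentedGrad r (a x) (ξ x)‖ ^ (p - 2) * a x ^ 2 ∂μ := by
  have hnonneg (x : X) : 0 ≤ ‖augmentedGrad r (a x) (ξ x)‖ ^ (p - 2) * a x ^ 2 := by positivity
  have hint : IntegrableOn (fun x => ‖augmentedGrad r (a x) (ξ x)‖ ^ (p - 2) * a x ^ 2) K μ := by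
    simpa only [sq] using integrableOn_norm_rpow_mul_mul hK hKm hp hr ha ha hξ
  refine (setIntegral_nonneg hKm fun x _ => hnonneg x).lt_of_ne' fun hzero => hne ?_
  filter_upwards [(setIntegral_eq_zero_iff_of_nonneg_ae (.of_forall hnonneg) hint).1 hzero]
    with x hx
  by_contra hax
  have hnorm : 0 < ‖augmentedGrad r (a x) (ξ x)‖ := norm_pos_iff.2 (ne_zero hr hax _)
  exact (mul_pos (Real.rpow_pos_of_pos hnorm _) (sq_pos_of_ne_zero hax)).ne' hx

lemma hasDerivAt_setIntegral_norm_rpow_line_deriv (hK : IsCompact K) (hKm : MeasurableSet K)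
    (hp : 1 < p) (ha : ContinuousOn a K) (hb : ContinuousOn b K) (hξ : ContinuousOn ξ K)
    (hη : ContinuousOn η K) {g : ℝ → ℝ} {g' : ℝ} (hg : HasDerivAt g g' 0) (hg0 : 0 < g 0) :
    HasDerivAt (fun t => ∫ x in K, ‖augmentedGrad (g t) (a x + t * b x) (ξ x + t • η x)‖ ^ p ∂μ)
      (∫ x in K, p * (‖augmentedGrad (g 0) (a x) (ξ x)‖ ^ (p - 2) *
        (g 0 * (a x * (g' / (2 * g 0) * a x + b x)) + ⟪ξ x, η x⟫)) ∂μ) 0 := by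
  -- To be used with `y = ((√(g t), t), (a x, b x, ξ x, η x))`.
  have hcontDiff : ContDiff ℝ 1 fun y : (ℝ × ℝ) × ℝ × ℝ × E × E =>
      ‖WithLp.toLp 2 (y.1.1 * (y.2.1 + y.1.2 * y.2.2.1), y.2.2.2.1 + y.1.2 • y.2.2.2.2)‖ ^ p :=
    ((WithLp.prodContinuousLinearEquiv 2 ℝ ℝ E).symm.contDiff.comp (by fun_prop)).norm_rpow hp
  refine hasDerivAt_setIntegral_comp_of_contDiff hK hKm hcontDiff
    (ha.prodMk (hb.prodMk (hξ.prodMk hη)))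
    ((hg.sqrt hg0.ne').differentiableAt.prodMk differentiableAt_id) fun x _ => ?_
  refine (hasDerivAt_norm_rpow_comp hp
    (hasDerivAt_line hg hg0 (a x) (b x) (ξ x) (η x))).congr_deriv ?_
  simp only [zero_mul, zero_smul, add_zero, inner_eq hg0.le]

theorem hasDerivAt_setIntegral_norm_rpow_line (hK : IsCompact K) (hKm : MeasurableSet K)
    (hp : 1 < p) (ha : ContinuousOn a K) (hb : ContinuousOn b K) (hξ : ContinuousOn ξ K)
    (hη : ContinuousOn η K) {g : ℝ → ℝ} {g' : ℝ} (hg : HasDerivAt g g' 0) (hg0 : 0 < g 0) :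
    HasDerivAt (fun t => ∫ x in K, ‖augmentedGrad (g t) (a x + t * b x) (ξ x + t • η x)‖ ^ p ∂μ)
      (p * (g' / 2 * (∫ x in K, ‖augmentedGrad (g 0) (a x) (ξ x)‖ ^ (p - 2) * a x ^ 2 ∂μ) +
        g 0 * (∫ x in K, ‖augmentedGrad (g 0) (a x) (ξ x)‖ ^ (p - 2) * (a x * b x) ∂μ) +
        ∫ x in K, ‖augmentedGrad (g 0) (a x) (ξ x)‖ ^ (p - 2) * ⟪ξ x, η x⟫ ∂μ)) 0 := by
  have hsq := integrableOn_norm_rpow_mul_mul (μ := μ) hK hKm hp hg0 ha ha hξ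
  have hmul := integrableOn_norm_rpow_mul_mul (μ := μ) hK hKm hp hg0 ha hb hξ
  have hinner := integrableOn_norm_rpow_mul_inner (μ := μ) hK hKm hp hg0.le ha hξ hη
  refine (hasDerivAt_setIntegral_norm_rpow_line_deriv hK hKm hp ha hb hξ hη hg
    hg0).congr_deriv ?_
  simp only [sq]
  rw [integral_const_mul, ← integral_const_mul (g' / 2), ← integral_const_mul (g 0),
    ← integral_add (hsq.const_mul _) (hmul.const_mul _),
    ← integral_add ((hsq.const_mul _).fun_add (hmul.const_mul _)) hinner]
  congr 2 with x
  field_simp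

end Integral

end augmentedGrad

theorem hasDerivAt_setIntegral_abs_rpow_line {X : Type*} [TopologicalSpace X] [MeasurableSpace X]
    [OpensMeasurableSpace X] {μ : Measure X} [IsFiniteMeasureOnCompacts μ] {K : Set X}
    (hK : IsCompact K) (hKm : MeasurableSet K) {p : ℝ} (hp : 1 < p) {a b : X → ℝ}
    (ha : ContinuousOn a K) (hb : ContinuousOn b K) :
    HasDerivAt (fun t => ∫ x in K, |a x + t * b x| ^ p ∂μ)
      (p * ∫ x in K, |a x| ^ (p - 2) * a x * b x ∂μ) 0 := by
  have hcontDiff : ContDiff ℝ 1 fun y : ℝ × ℝ × ℝ => |y.2.1 + y.1 * y.2.2| ^ p :=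
    ContDiff.norm_rpow (E := ℝ) (by fun_prop) hp
  rw [← integral_const_mul]
  refine hasDerivAt_setIntegral_comp_of_contDiff hK hKm hcontDiff (ha.prodMk hb)
    differentiableAt_id fun x _ => ?_
  have hline : HasDerivAt (fun t => a x + t * b x) (b x) 0 := by
    simpa using ((hasDerivAt_id (0 : ℝ)).mul_const (b x)).const_add (a x)
  refine (hasDerivAt_norm_rpow_comp hp hline).congr_deriv ?_
  simp only [zero_mul, add_zero, Real.norm_eq_abs, Real.inner_apply]
  ring

lemma continuous_gradient_of_contDiff {E : Type*} [NormedAddCommGroup E] [InnerProductSpace ℝ E]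
    [CompleteSpace E] {u : E → ℝ} (hu : ContDiff ℝ 1 u) : Continuous (∇ u) :=
  (InnerProductSpace.toDual ℝ E).symm.continuous.comp (hu.continuous_fderiv one_ne_zero)

/-- For `p < 2` the powers with exponents `p - 2` and `(p - 2) / 2` take the junk value `0` at base
`0`, but only at points where the factors they multiply vanish as well. -/
theorem stmt_15_general {E : Type*} [NormedAddCommGroup E] [InnerProductSpace ℝ E]
    [CompleteSpace E] [MeasurableSpace E] [OpensMeasurableSpace E] {μ : Measure E}
    [IsFiniteMeasureOnCompacts μ] {K : Set E} (hK : IsCompact K) {p lam : ℝ} (hp : 1 < p)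
    {u v : E → ℝ} (hu : ContDiff ℝ 1 u) (hv : ContDiff ℝ 1 v)
    (hne : ¬ u =ᵐ[μ.restrict K] 0) {g : ℝ → ℝ} (hg0 : 0 < g 0)
    (hg : DifferentiableAt ℝ g 0)
    (hgeq : ∀ᶠ t in 𝓝 0,
      ∫ x in K, (g t * (u x + t * v x) ^ 2 + ‖∇ u x + t • ∇ v x‖ ^ 2) ^ (p / 2) ∂μ =
        lam * ∫ x in K, |u x + t * v x| ^ p ∂μ) :
    deriv g 0 =
      2 * (lam * (∫ x in K, |u x| ^ (p - 2) * u x * v x ∂μ)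
           - g 0 * (∫ x in K, (g 0 * u x ^ 2 + ‖∇ u x‖ ^ 2) ^ ((p - 2) / 2) * (u x * v x) ∂μ)
           - (∫ x in K, (g 0 * u x ^ 2 + ‖∇ u x‖ ^ 2) ^ ((p - 2) / 2) * ⟪∇ u x, ∇ v x⟫ ∂μ))
        / (∫ x in K, (g 0 * u x ^ 2 + ‖∇ u x‖ ^ 2) ^ ((p - 2) / 2) * u x ^ 2 ∂μ) := by
  have hKm := hK.measurableSet
  have hcu := hu.continuous.continuousOn (s := K)
  have hcv := hv.continuous.continuousOn (s := K)
  have hcu' := (continuous_gradient_of_contDiff hu).continuousOn (s := K)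
  have hcv' := (continuous_gradient_of_contDiff hv).continuousOn (s := K)
  have hleft := augmentedGrad.hasDerivAt_setIntegral_norm_rpow_line (μ := μ) hK hKm hp hcu hcv
    hcu' hcv' hg.hasDerivAt hg0
  have hright := (hasDerivAt_setIntegral_abs_rpow_line (μ := μ) hK hKm hp hcu hcv).const_mul lam
  have hgpos : ∀ᶠ t in 𝓝 0, 0 < g t := hg.continuousAt.eventually_const_lt hg0
  have hsides := hleft.unique <| hright.congr_of_eventuallyEq <| by
    filter_upwards [hgpos, hgeq] with t hgt ht
    simpa only [augmentedGrad.norm_rpow hgt.le] using ht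
  have hdenom := augmentedGrad.setIntegral_norm_rpow_mul_sq_pos hK hKm hp hg0 hcu hcu' hne
  simp only [augmentedGrad.norm_rpow hg0.le] at hsides hdenom
  rw [eq_div_iff hdenom.ne']
  have hp0 : p ≠ 0 := by positivity
  refine mul_left_cancel₀ hp0 ?_
  linear_combination 2 * hsides

/-- Derivative of the root functional (formula (4.6) of the paper):
if `g : (−ε, ε) → (0, ∞)` is differentiable at `0` and for all `t ∈ (−ε, ε)`
`∫₀¹ (g(t)(u+tv)² + (u'+tv')²)^(p/2) = λ∫₀¹ |u+tv|^p`, then with `ν = g(0)`,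
`g'(0) = 2[λ∫|u|^(p−2)uv − ν∫(νu²+u'²)^((p−2)/2)uv − ∫(νu²+u'²)^((p−2)/2)u'v'] /
∫(νu²+u'²)^((p−2)/2)u²`. -/
theorem stmt_15 (p lam : ℝ) (hp : 2 ≤ p) (u v : ℝ → ℝ)
    (hu : ContDiff ℝ 1 u) (hv : ContDiff ℝ 1 v)
    (hne : ∃ x ∈ Icc (0:ℝ) 1, u x ≠ 0)
    (ε : ℝ) (hε : 0 < ε) (g : ℝ → ℝ)
    (hgpos : ∀ t ∈ Ioo (-ε) ε, 0 < g t)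
    (hgdiff : DifferentiableAt ℝ g 0)
    (hgeq : ∀ t ∈ Ioo (-ε) ε,
      (∫ x in (0:ℝ)..1,
          (g t * (u x + t * v x) ^ 2 + (deriv u x + t * deriv v x) ^ 2) ^ (p / 2))
        = lam * ∫ x in (0:ℝ)..1, |u x + t * v x| ^ p) :
    deriv g 0 =
      2 * (lam * (∫ x in (0:ℝ)..1, |u x| ^ (p - 2) * u x * v x)
           - g 0 * (∫ x in (0:ℝ)..1,
              (g 0 * (u x) ^ 2 + (deriv u x) ^ 2) ^ ((p - 2) / 2) * u x * v x)
           - (∫ x in (0:ℝ)..1,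
              (g 0 * (u x) ^ 2 + (deriv u x) ^ 2) ^ ((p - 2) / 2) * deriv u x * deriv v x))
        / (∫ x in (0:ℝ)..1, (g 0 * (u x) ^ 2 + (deriv u x) ^ 2) ^ ((p - 2) / 2) * (u x) ^ 2) := by
  have hne' : ¬ u =ᵐ[volume.restrict (Icc 0 1)] 0 := fun hu0 =>
    have ⟨x, hx, hux⟩ := hne
    hux (Measure.eqOn_Icc_of_ae_eq volume zero_ne_one hu0 hu.continuous.continuousOn
      continuousOn_const hx)
  have hIoo : Ioo (-ε) ε ∈ 𝓝 0 := Ioo_mem_nhds (neg_lt_zero.2 hε) hε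
  simp only [intervalIntegral.integral_of_le zero_le_one, ← integral_Icc_eq_integral_Ioc] at hgeq ⊢
  simpa only [gradient_eq_deriv', Real.norm_eq_abs, sq_abs, smul_eq_mul, Real.inner_apply,
    mul_assoc] using stmt_15_general isCompact_Icc (by linarith) hu hv hne'
    (hgpos 0 (mem_of_mem_nhds hIoo)) hgdiff (by
      filter_upwards [hIoo] with t ht
      simpa only [gradient_eq_deriv', Real.norm_eq_abs, sq_abs, smul_eq_mul] using hgeq t ht)
end

section
/- For real k, λ with k⁴ < λ, define π₄(λ, k) := 2 ∫₀^{(3/(λ−k⁴))^{1/4}} [−(k²/3)s² + √(k⁴s⁴/9 + 1 − ((λ−k⁴)/3)s⁴)]^{−1/2} ds. Then for every fixed k ∈ ℝ: the function λ ↦ π₄(λ, k) is strictly decreasing on (k⁴, ∞), π₄(λ, k) → +∞ as λ → k⁴⁺, and π₄(λ, k) → 0 as λ → +∞. -/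
open MeasureTheory Set Filter

/-!
Put `R = ((λ - k⁴) / 3)^{-1/4}` and rescale `s = R t`. This gives
`π₄(λ, k) = 2 R T(k² R² / 3)`, where `T c = ∫₀¹ (-c t² + √(c² t⁴ + 1 - t⁴))^{-1/2} dt`.

The base of the integrand of `T` is the nonnegative root of `u² + 2 c t² u = 1 - t⁴`. Comparing
values of this quadratic shows that the root decreases in `c` and is at least
`(1 - t⁴) / (2 |c| + 1)`, so `T` is finite, positive and increasing. Since `R` decreases strictly
from `+∞` to `0` as `λ` runs through `(k⁴, ∞)`, so does `2 R T(k² R² / 3)`.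
-/

namespace HalfPeriod

section MulMonotone

variable {G : ℝ → ℝ}

lemma strictMonoOn_mul_of_monotoneOn (hG : MonotoneOn G (Ici 0)) (h0 : 0 < G 0) :
    StrictMonoOn (fun x => x * G x) (Ici 0) := by
  intro x hx y hy hxy
  have hGx : 0 < G x := h0.trans_le (hG self_mem_Ici hx hx)
  exact mul_lt_mul hxy (hG hx hy hxy.le) hGx hy

lemma tendsto_mul_atTop_of_monotoneOn (hG : MonotoneOn G (Ici 0)) (h0 : 0 < G 0) :
    Tendsto (fun x => x * G x) atTop atTop := by
  refine tendsto_atTop_mono' _ ?_ (tendsto_id.atTop_mul_const h0)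
  filter_upwards [eventually_ge_atTop 0] with x hx
  exact mul_le_mul_of_nonneg_left (hG self_mem_Ici hx hx) hx

lemma tendsto_mul_nhdsGT_zero_of_monotoneOn (hG : MonotoneOn G (Ici 0)) :
    Tendsto (fun x => x * G x) (nhdsWithin 0 (Ioi 0)) (nhds 0) := by
  have bddBelow_image : BddBelow (G '' Ioi 0) :=
    ⟨G 0, forall_mem_image.2 fun _ hx => hG self_mem_Ici (mem_Ioi.1 hx).le (mem_Ioi.1 hx).le⟩
  have tendsto_G := (hG.mono Ioi_subset_Ici_self).tendsto_nhdsGT bddBelow_image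
  simpa only [zero_mul, id] using (tendsto_id.mono_left nhdsWithin_le_nhds).mul tendsto_G

end MulMonotone

section AffineRpow

variable {a c p : ℝ}

lemma mapsTo_sub_div_Ioi (hc : 0 < c) : MapsTo (fun x => (x - a) / c) (Ioi a) (Ioi 0) :=
  fun _ hx => div_pos (sub_pos.2 hx) hc

lemma strictAntiOn_sub_div_rpow (hc : 0 < c) (hp : p < 0) :
    StrictAntiOn (fun x => ((x - a) / c) ^ p) (Ioi a) :=
  (Real.strictAntiOn_rpow_Ioi_of_exponent_neg hp).comp_strictMonoOn
    (fun _ _ _ _ hxy => div_lt_div_of_pos_right (sub_lt_sub_right hxy a) hc)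
    (mapsTo_sub_div_Ioi hc)

lemma tendsto_sub_div_rpow_nhdsGT (hc : 0 < c) (hp : p < 0) :
    Tendsto (fun x => ((x - a) / c) ^ p) (nhdsWithin a (Ioi a)) atTop := by
  have continuousAt_affine : ContinuousWithinAt (fun x => (x - a) / c) (Ioi a) a := by fun_prop
  have tendsto_affine := continuousAt_affine.tendsto_nhdsWithin (mapsTo_sub_div_Ioi hc)
  rw [sub_self, zero_div] at tendsto_affine
  exact (tendsto_rpow_neg_nhdsGT_zero hp).comp tendsto_affine

lemma tendsto_sub_div_rpow_atTop (hc : 0 < c) (hp : p < 0) :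
    Tendsto (fun x => ((x - a) / c) ^ p) atTop (nhdsWithin 0 (Ioi 0)) := by
  have tendsto_affine : Tendsto (fun x => (x - a) / c) atTop atTop :=
    (tendsto_atTop_add_const_right _ (-a) tendsto_id).atTop_div_const hc
  refine tendsto_nhdsWithin_iff.2 ⟨?_, ?_⟩
  · simpa only [neg_neg, Function.comp_def] using
      (tendsto_rpow_neg_atTop (neg_pos.2 hp)).comp tendsto_affine
  · filter_upwards [eventually_gt_atTop a] with x hx
    exact Real.rpow_pos_of_pos (mapsTo_sub_div_Ioi hc hx) p

end AffineRpow

lemma intervalIntegrable_rpow_of_mul_sub_le {f : ℝ → ℝ} {a b δ r : ℝ} (hab : a ≤ b)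
    (hf : Measurable f) (hδ : 0 < δ) (hfδ : ∀ t ∈ Ioo a b, δ * (b - t) ≤ f t)
    (hr : -1 < r) (hr0 : r ≤ 0) :
    IntervalIntegrable (fun t => f t ^ r) volume a b := by
  have integrable_bound : IntervalIntegrable (fun t => δ ^ r * (b - t) ^ r) volume a b := by
    have := (intervalIntegral.intervalIntegrable_rpow' (a := b - a) (b := 0) hr).comp_sub_left b
    rw [sub_sub_cancel, sub_zero] at this
    exact this.const_mul _
  rw [intervalIntegrable_iff_integrableOn_Ioo_of_le hab] at integrable_bound ⊢
  refine integrable_bound.mono' (hf.pow_const r).aestronglyMeasurable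
    ((ae_restrict_iff' measurableSet_Ioo).2 (.of_forall fun t ht => ?_))
  have hbt : 0 < b - t := sub_pos.2 ht.2
  have bound_pos : 0 < δ * (b - t) := mul_pos hδ hbt
  rw [Real.norm_of_nonneg (Real.rpow_nonneg (bound_pos.le.trans (hfδ t ht)) r),
    ← Real.mul_rpow hδ.le hbt.le]
  exact Real.rpow_le_rpow_of_nonpos bound_pos (hfδ t ht) hr0

/-- The larger root of the quadratic equation `u² + 2 x u = y`, for `0 ≤ x² + y`. -/
noncomputable def quadRoot (x y : ℝ) : ℝ := √(x ^ 2 + y) - x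

section QuadRoot

variable {u x y : ℝ}

lemma quadRoot_sq_add (h : 0 ≤ x ^ 2 + y) : quadRoot x y ^ 2 + 2 * x * quadRoot x y = y := by
  unfold quadRoot
  linear_combination Real.sq_sqrt h

lemma le_quadRoot (h : u ^ 2 + 2 * x * u ≤ y) : u ≤ quadRoot x y :=
  le_sub_iff_add_le.2 (Real.le_sqrt_of_sq_le (by linarith))

lemma quadRoot_nonneg (hy : 0 ≤ y) : 0 ≤ quadRoot x y := le_quadRoot (by simpa using hy)

lemma quadRoot_pos (hy : 0 < y) : 0 < quadRoot x y :=
  sub_pos.2 (Real.lt_sqrt_of_sq_lt (lt_add_of_pos_right _ hy))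

lemma antitone_quadRoot_left (hy : 0 ≤ y) : Antitone fun x => quadRoot x y := by
  intro x x' hxx'
  have root_nonneg : 0 ≤ quadRoot x' y := quadRoot_nonneg hy
  refine le_quadRoot ?_
  calc quadRoot x' y ^ 2 + 2 * x * quadRoot x' y
      ≤ quadRoot x' y ^ 2 + 2 * x' * quadRoot x' y := by gcongr
    _ = y := quadRoot_sq_add (by positivity)

lemma div_le_quadRoot (hx : 0 ≤ x) (hy : 0 ≤ y) (hy1 : y ≤ 1) :
    y / (2 * x + 1) ≤ quadRoot x y := by
  set u := y / (2 * x + 1)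
  have u_nonneg : 0 ≤ u := by positivity
  have u_le_one : u ≤ 1 := div_le_one_of_le₀ (by linarith) (by positivity)
  refine le_quadRoot ?_
  calc u ^ 2 + 2 * x * u
      ≤ u + 2 * x * u := by
        gcongr
        exact pow_le_of_le_one u_nonneg u_le_one two_ne_zero
    _ = u * (2 * x + 1) := by ring
    _ = y := div_mul_cancel₀ y (by positivity)

end QuadRoot

/-- The half-period integral after rescaling to `[0, 1]`, up to the factor from the change of
variables; `r = -1/2` in the paper. The first argument of `quadRoot` carries the dependence on the
perturbation, and `1 - t ^ 4` comes from `p = 4`. -/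
noncomputable def unitIntegral (r c : ℝ) : ℝ :=
  ∫ t in (0 : ℝ)..1, quadRoot (c * t ^ 2) (1 - t ^ 4) ^ r

section UnitIntegral

variable {r : ℝ}

lemma one_sub_pow_four_pos {t : ℝ} (ht : t ∈ Ioo (0 : ℝ) 1) : 0 < 1 - t ^ 4 :=
  sub_pos.2 (pow_lt_one₀ ht.1.le ht.2 four_ne_zero)

lemma mul_one_sub_le_quadRoot (c : ℝ) {t : ℝ} (ht : t ∈ Ioo (0 : ℝ) 1) :
    (2 * |c| + 1)⁻¹ * (1 - t) ≤ quadRoot (c * t ^ 2) (1 - t ^ 4) := by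
  have hy := (one_sub_pow_four_pos ht).le
  have coeff_le : c * t ^ 2 ≤ |c| :=
    (mul_le_mul_of_nonneg_right (le_abs_self c) (sq_nonneg t)).trans
      (mul_le_of_le_one_right (abs_nonneg c) (pow_le_one₀ ht.1.le ht.2.le))
  calc (2 * |c| + 1)⁻¹ * (1 - t)
      ≤ (2 * |c| + 1)⁻¹ * (1 - t ^ 4) := by
        gcongr
        exact pow_le_of_le_one ht.1.le ht.2.le four_ne_zero
    _ = (1 - t ^ 4) / (2 * |c| + 1) := inv_mul_eq_div _ _
    _ ≤ quadRoot |c| (1 - t ^ 4) :=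
        div_le_quadRoot (abs_nonneg c) hy (sub_le_self _ (pow_nonneg ht.1.le 4))
    _ ≤ quadRoot (c * t ^ 2) (1 - t ^ 4) := antitone_quadRoot_left hy coeff_le

lemma intervalIntegrable_quadRoot_rpow (hr : -1 < r) (hr0 : r ≤ 0) (c : ℝ) :
    IntervalIntegrable (fun t => quadRoot (c * t ^ 2) (1 - t ^ 4) ^ r) volume 0 1 :=
  intervalIntegrable_rpow_of_mul_sub_le zero_le_one (by unfold quadRoot; fun_prop)
    (by positivity) (fun _ ht => mul_one_sub_le_quadRoot c ht) hr hr0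

lemma monotone_unitIntegral (hr : -1 < r) (hr0 : r ≤ 0) : Monotone (unitIntegral r) := by
  intro c d hcd
  refine intervalIntegral.integral_mono_on_of_le_Ioo zero_le_one
    (intervalIntegrable_quadRoot_rpow hr hr0 c) (intervalIntegrable_quadRoot_rpow hr hr0 d)
    fun t ht => ?_
  have hy := one_sub_pow_four_pos ht
  exact Real.rpow_le_rpow_of_nonpos (quadRoot_pos hy)
    (antitone_quadRoot_left hy.le (mul_le_mul_of_nonneg_right hcd (sq_nonneg t))) hr0

lemma unitIntegral_pos (hr : -1 < r) (hr0 : r ≤ 0) (c : ℝ) : 0 < unitIntegral r c :=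
  intervalIntegral.intervalIntegral_pos_of_pos_on (intervalIntegrable_quadRoot_rpow hr hr0 c)
    (fun _ ht => Real.rpow_pos_of_pos (quadRoot_pos (one_sub_pow_four_pos ht)) r) zero_lt_one

lemma integral_quadRoot_eq_mul_unitIntegral {b R : ℝ} (hbR : b * R ^ 4 = 1) (r q : ℝ) :
    ∫ s in (0 : ℝ)..R, quadRoot (q * s ^ 2) (1 - b * s ^ 4) ^ r =
      R * unitIntegral r (q * R ^ 2) := by
  have rescale := intervalIntegral.mul_integral_comp_mul_left (a := 0) (b := 1)
    (f := fun s => quadRoot (q * s ^ 2) (1 - b * s ^ 4) ^ r) R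
  rw [mul_zero, mul_one] at rescale
  rw [← rescale, unitIntegral]
  congr! 5 with t
  · ring
  · linear_combination -t ^ 4 * hbR

end UnitIntegral

lemma mul_rpow_pow_eq_one {b p : ℝ} {n : ℕ} (hb : 0 < b) (hpn : p * n = -1) :
    b * (b ^ p) ^ n = 1 := by
  rw [← Real.rpow_mul_natCast hb.le, hpn, Real.rpow_neg_one, mul_inv_cancel₀ hb.ne']

/-- The upper limit `(3 / (λ - k⁴))^{1/4}` of the half-period integral, written as a negative power
so that its monotonicity and limits in `λ` are those of `x ↦ x^{-1/4}`. -/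
noncomputable def amplitude (k lam : ℝ) : ℝ := ((lam - k ^ 4) / 3) ^ (-(1 / 4 : ℝ))

lemma integral_halfPeriod_eq {k lam : ℝ} (r : ℝ) (h : k ^ 4 < lam) :
    ∫ s in (0 : ℝ)..((3 / (lam - k ^ 4)) ^ ((1 : ℝ) / 4)),
        (-(k ^ 2 / 3) * s ^ 2 +
          √(k ^ 4 * s ^ 4 / 9 + 1 - (lam - k ^ 4) / 3 * s ^ 4)) ^ r =
      amplitude k lam * unitIntegral r (k ^ 2 / 3 * amplitude k lam ^ 2) := by
  have hb : 0 < (lam - k ^ 4) / 3 := div_pos (sub_pos.2 h) three_pos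
  have mul_amplitude_pow : (lam - k ^ 4) / 3 * amplitude k lam ^ 4 = 1 :=
    mul_rpow_pow_eq_one hb (by norm_num)
  rw [← integral_quadRoot_eq_mul_unitIntegral mul_amplitude_pow, amplitude,
    Real.rpow_neg_eq_inv_rpow, inv_div]
  congr! 3 with s
  rw [quadRoot, neg_mul, neg_add_eq_sub]
  ring_nf

end HalfPeriod

open HalfPeriod in
/-- The half-period
`π₄(λ,k) = 2∫₀^{(3/(λ−k⁴))^{1/4}} [−(k²/3)s² + √(k⁴s⁴/9 + 1 − ((λ−k⁴)/3)s⁴)]^{−1/2} ds`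
(defined for `k⁴ < λ`) is, for every fixed `k`, strictly decreasing in `λ` on
`(k⁴, ∞)`, tends to `+∞` as `λ → k⁴⁺`, and tends to `0` as `λ → +∞`. -/
theorem stmt_16 (pi4 : ℝ → ℝ → ℝ)
    (hpi4 : ∀ lam k : ℝ, k ^ 4 < lam → pi4 lam k =
      2 * ∫ s in (0:ℝ)..((3 / (lam - k ^ 4)) ^ ((1:ℝ)/4)),
        (-(k ^ 2 / 3) * s ^ 2 +
          Real.sqrt (k ^ 4 * s ^ 4 / 9 + 1 - (lam - k ^ 4) / 3 * s ^ 4)) ^ (-(1:ℝ)/2)) :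
    ∀ k : ℝ,
      StrictAntiOn (fun lam => pi4 lam k) (Ioi (k ^ 4)) ∧
      Tendsto (fun lam => pi4 lam k) (nhdsWithin (k ^ 4) (Ioi (k ^ 4))) atTop ∧
      Tendsto (fun lam => pi4 lam k) atTop (nhds 0) := by
  intro k
  have hr : -1 < -(1 : ℝ) / 2 := by norm_num
  have hr0 : -(1 : ℝ) / 2 ≤ 0 := by norm_num
  have hp : -(1 / 4 : ℝ) < 0 := by norm_num
  let G : ℝ → ℝ := fun R => 2 * unitIntegral (-(1 : ℝ) / 2) (k ^ 2 / 3 * R ^ 2)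
  have G_zero_pos : 0 < G 0 := mul_pos two_pos (unitIntegral_pos hr hr0 _)
  have G_mono : MonotoneOn G (Ici 0) := fun R (hR : 0 ≤ R) S _ hRS =>
    mul_le_mul_of_nonneg_left (monotone_unitIntegral hr hr0 (by gcongr)) zero_le_two
  have pi4_eq : EqOn ((fun R => R * G R) ∘ amplitude k) (fun lam => pi4 lam k) (Ioi (k ^ 4)) :=
    fun lam hlam => by
      simp only [Function.comp_apply, G, hpi4 lam k hlam, integral_halfPeriod_eq _ hlam,
        mul_left_comm]
  refine ⟨StrictAntiOn.congr ?_ pi4_eq, Tendsto.congr' pi4_eq.eventuallyEq_nhdsWithin ?_,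
    Tendsto.congr' ((eventually_gt_atTop _).mono pi4_eq) ?_⟩
  · exact (strictMonoOn_mul_of_monotoneOn G_mono G_zero_pos).comp_strictAntiOn
      (strictAntiOn_sub_div_rpow three_pos hp)
      fun lam hlam => Real.rpow_nonneg (mapsTo_sub_div_Ioi three_pos hlam).le _
  · exact (tendsto_mul_atTop_of_monotoneOn G_mono G_zero_pos).comp
      (tendsto_sub_div_rpow_nhdsGT three_pos hp)
  · exact (tendsto_mul_nhdsGT_zero_of_monotoneOn G_mono).comp
      (tendsto_sub_div_rpow_atTop three_pos hp)
end

section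
/- For real k, λ with k⁴ < λ, define π₄(λ, k) := 2 ∫₀^{(3/(λ−k⁴))^{1/4}} [−(k²/3)s² + √(k⁴s⁴/9 + 1 − ((λ−k⁴)/3)s⁴)]^{−1/2} ds. Then for every fixed k ∈ ℝ and every positive integer n, the equation π₄(λ, k) = 1/n has a unique solution λ_n(k) ∈ (k⁴, ∞), and λ_n(k) → +∞ as n → ∞. -/
open MeasureTheory Set Filter

/-!
Put `R = (3 / (λ - k⁴)) ^ (1/4)` and `b = k² R² / 3`. The substitution `s = R t`, followed by
rationalising `(-x + √(x² + c)) (x + √(x² + c)) = c` with `x = b t²` and `c = 1 - t⁴`, gives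
`π₄(λ, k) = 2 R J(b)` with `J(b) = ∫₀¹ √(b t² + √(b² t⁴ + 1 - t⁴)) / √(1 - t⁴) dt`.

In this form the integrand is a fixed integrable weight times a jointly continuous function which
increases with `b ≥ 0`. So `J` is continuous, positive and increasing on `[0, ∞)`, and
`R ↦ 2 R J(k² R² / 3)` is an increasing bijection of `(0, ∞)`. As `λ ↦ R` is a decreasing bijection
from `(k⁴, ∞)` onto `(0, ∞)`, so is `λ ↦ π₄(λ, k)`; in particular `λ → ∞` whenever `π₄(λ, k) → 0`.
-/

open scoped Topology

theorem existsUnique_of_bijOn {α β : Type*} {f : α → β} {s : Set α} {t : Set β}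
    (h : BijOn f s t) {y : β} (hy : y ∈ t) : ∃! x, x ∈ s ∧ f x = y := by
  obtain ⟨x, hx, rfl⟩ := h.surjOn hy
  exact ⟨x, ⟨hx, rfl⟩, fun x' hx' => h.injOn hx'.1 hx hx'.2⟩

theorem tendsto_atTop_of_antitoneOn_Ioi {ι α β : Type*} [LinearOrder α] [NoMaxOrder α]
    [LinearOrder β] [TopologicalSpace β] [OrderTopology β] {f : α → β} {a : α} {m : β}
    (hf : AntitoneOn f (Ioi a)) (hm : MapsTo f (Ioi a) (Ioi m)) {l : Filter ι} {u : ι → α}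
    (hu : ∀ᶠ i in l, a < u i) (hlim : Tendsto (fun i => f (u i)) l (𝓝 m)) :
    Tendsto u l atTop := by
  refine (atTop_basis_Ioi' a).tendsto_right_iff.2 fun M hM => ?_
  filter_upwards [hu, hlim.eventually_lt_const (hm hM)] with i hai hlt
  exact not_le.1 fun hle => hlt.not_ge (hf hai hM hle)

section MulSelf

variable {f : ℝ → ℝ}

theorem strictMonoOn_self_mul_of_monotoneOn_Ici (hf : MonotoneOn f (Ici 0)) (h0 : 0 < f 0) :
    StrictMonoOn (fun x => x * f x) (Ici 0) := by
  intro x hx y hy hxy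
  have hfy : 0 < f y := h0.trans_le (hf self_mem_Ici hy hy)
  calc x * f x ≤ x * f y := mul_le_mul_of_nonneg_left (hf hx hy hxy.le) hx
    _ < y * f y := mul_lt_mul_of_pos_right hxy hfy

theorem bijOn_self_mul_of_monotoneOn_Ici (hf : MonotoneOn f (Ici 0)) (h0 : 0 < f 0)
    (hc : ContinuousOn f (Ici 0)) : BijOn (fun x => x * f x) (Ioi 0) (Ioi 0) := by
  have hmono := strictMonoOn_self_mul_of_monotoneOn_Ici hf h0
  have htop : Tendsto (fun x => x * f x) atTop atTop := by
    refine tendsto_atTop_mono' _ ?_ (tendsto_id.atTop_mul_const h0)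
    filter_upwards [eventually_ge_atTop 0] with x hx
    exact mul_le_mul_of_nonneg_left (hf self_mem_Ici hx hx) hx
  have himage : (fun x => x * f x) '' Ioi 0 = Ioi 0 := by
    simpa using ContinuousOn.image_Ioi_of_strictMonoOn (by fun_prop) hmono htop
  simpa only [himage] using (hmono.mono Ioi_subset_Ici_self).injOn.bijOn_image

end MulSelf

theorem continuous_intervalIntegral_smul {X E : Type*} [TopologicalSpace X]
    [FirstCountableTopology X] [NormedAddCommGroup E] [NormedSpace ℝ E] {μ : Measure ℝ}
    {a b : ℝ} {f : X → ℝ → ℝ} (hf : Continuous f.uncurry) {w : ℝ → E}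
    (hw : IntervalIntegrable w μ a b) : Continuous fun x => ∫ t in a..b, f x t • w t ∂μ := by
  refine continuous_iff_continuousAt.2 fun x₀ => ?_
  have hcont : ∀ x, Continuous (f x) := fun x => hf.comp (.prodMk_right x)
  obtain ⟨C, hC⟩ := isCompact_uIcc.exists_bound_of_continuousOn (hcont x₀).continuousOn
  have hbound : ∀ᶠ x in 𝓝 x₀, ∀ t ∈ uIcc a b, ‖f x t‖ < C + 1 :=
    isCompact_uIcc.eventually_forall_of_forall_eventually fun t ht =>
      hf.norm.continuousAt.eventually_lt_const ((hC t ht).trans_lt (lt_add_one C))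
  refine intervalIntegral.continuousAt_of_dominated_interval
    (bound := fun t => (C + 1) * ‖w t‖) ?_ ?_ (hw.norm.const_mul _) ?_
  · exact .of_forall fun x => (hcont x).aestronglyMeasurable.smul hw.def'.aestronglyMeasurable
  · filter_upwards [hbound] with x hx
    refine .of_forall fun t ht => ?_
    rw [norm_smul]
    exact mul_le_mul_of_nonneg_right (hx t (uIoc_subset_uIcc ht)).le (norm_nonneg _)
  · exact .of_forall fun t _ => ((hf.comp (.prodMk_left t)).smul continuous_const).continuousAt

theorem intervalIntegrable_inv_sqrt_one_sub_pow {n : ℕ} (hn : n ≠ 0) :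
    IntervalIntegrable (fun t : ℝ => (√(1 - t ^ n))⁻¹) volume 0 1 := by
  have hlin : IntervalIntegrable (fun t : ℝ => (1 - t) ^ (-(1 / 2) : ℝ)) volume 0 1 := by
    simpa using ((intervalIntegral.intervalIntegrable_rpow' (a := 0) (b := 1)
      (r := -(1 / 2)) (by norm_num)).comp_sub_left 1).symm
  refine hlin.mono_fun' (by fun_prop) ?_
  rw [uIoc_of_le zero_le_one, ← restrict_Ioo_eq_restrict_Ioc]
  filter_upwards [ae_restrict_mem measurableSet_Ioo] with t ht
  have hpow : t ^ n ≤ t := pow_le_of_le_one ht.1.le ht.2.le hn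
  have hpos : 0 < 1 - t := sub_pos.2 ht.2
  rw [Real.norm_of_nonneg (by positivity), Real.rpow_neg hpos.le, ← Real.sqrt_eq_rpow]
  gcongr

theorem add_sqrt_sq_add_pos {c : ℝ} (hc : 0 < c) (x : ℝ) : 0 < x + √(x ^ 2 + c) := by
  have : |x| < √(x ^ 2 + c) := Real.lt_sqrt_of_sq_lt (by rw [sq_abs]; linarith)
  linarith [neg_abs_le x]

theorem neg_add_sqrt_rpow_neg_half {c : ℝ} (hc : 0 < c) (x : ℝ) :
    (-x + √(x ^ 2 + c)) ^ (-(1 : ℝ) / 2) = √(x + √(x ^ 2 + c)) * (√c)⁻¹ := by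
  have hpos := add_sqrt_sq_add_pos hc x
  have hsq : √(x ^ 2 + c) ^ 2 = x ^ 2 + c := Real.sq_sqrt (by positivity)
  have hconj : -x + √(x ^ 2 + c) = c / (x + √(x ^ 2 + c)) := by
    rw [eq_div_iff hpos.ne']
    linear_combination hsq
  rw [hconj, neg_div, Real.rpow_neg (by positivity), ← Real.sqrt_eq_rpow, Real.sqrt_div hc.le,
    inv_div, div_eq_mul_inv]

/-- The half-period `2 ∫₀¹ (-b t² + √(b² t⁴ + 1 - t⁴)) ^ (-1/2) dt` of a solution rescaled to have
amplitude `1`, with the integrand in rationalised form. -/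
noncomputable def unitHalfPeriod (b : ℝ) : ℝ :=
  2 * ∫ t in (0 : ℝ)..1, √(b * t ^ 2 + √((b * t ^ 2) ^ 2 + (1 - t ^ 4))) * (√(1 - t ^ 4))⁻¹

theorem intervalIntegrable_unitHalfPeriod_integrand (b : ℝ) :
    IntervalIntegrable
      (fun t : ℝ => √(b * t ^ 2 + √((b * t ^ 2) ^ 2 + (1 - t ^ 4))) * (√(1 - t ^ 4))⁻¹)
      volume 0 1 :=
  (intervalIntegrable_inv_sqrt_one_sub_pow four_ne_zero).continuousOn_mul (by fun_prop)

theorem continuous_unitHalfPeriod : Continuous unitHalfPeriod :=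
  (continuous_intervalIntegral_smul
    (f := fun b t => √(b * t ^ 2 + √((b * t ^ 2) ^ 2 + (1 - t ^ 4)))) (by fun_prop)
    (intervalIntegrable_inv_sqrt_one_sub_pow four_ne_zero)).const_mul 2

theorem monotoneOn_unitHalfPeriod : MonotoneOn unitHalfPeriod (Ici 0) := by
  intro b hb b' _ hbb'
  have hb : 0 ≤ b := hb
  refine mul_le_mul_of_nonneg_left (intervalIntegral.integral_mono_on_of_le_Ioo zero_le_one
    (intervalIntegrable_unitHalfPeriod_integrand b)
    (intervalIntegrable_unitHalfPeriod_integrand b') fun t _ => ?_) zero_le_two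
  gcongr

theorem monotoneOn_unitHalfPeriod_mul_sq {c : ℝ} (hc : 0 ≤ c) :
    MonotoneOn (fun R => unitHalfPeriod (c * R ^ 2)) (Ici 0) := by
  refine monotoneOn_unitHalfPeriod.comp (fun R hR S _ hRS => ?_) fun R _ => ?_
  · have hR : 0 ≤ R := hR
    gcongr
  · exact mem_Ici.2 (by positivity)

theorem unitHalfPeriod_pos (b : ℝ) : 0 < unitHalfPeriod b := by
  refine mul_pos two_pos (intervalIntegral.intervalIntegral_pos_of_pos_on
    (intervalIntegrable_unitHalfPeriod_integrand b) (fun t ht => ?_) one_pos)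
  have hc : 0 < 1 - t ^ 4 := sub_pos.2 (pow_lt_one₀ ht.1.le ht.2 four_ne_zero)
  have := add_sqrt_sq_add_pos hc (b * t ^ 2)
  positivity

/-- The half-period `π₄` as a function of the amplitude `R` of the solution with `u(0) = 0` and
`u'(0) = 1`. -/
noncomputable def halfPeriodOfAmplitude (k R : ℝ) : ℝ :=
  R * unitHalfPeriod (k ^ 2 / 3 * R ^ 2)

/-- The upper limit `(3 / (λ - k⁴)) ^ (1/4)` of the integral defining `π₄(λ, k)`, for `k⁴ < λ`: the
amplitude of the solution with `u(0) = 0` and `u'(0) = 1`. -/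
noncomputable def amplitude (k lam : ℝ) : ℝ := (3 / (lam - k ^ 4)) ^ ((1 : ℝ) / 4)

/-- The half-period `π₄(λ, k)`, meant for `k⁴ < λ`, with the fixed parameter `k` first. -/
noncomputable def halfPeriod (k lam : ℝ) : ℝ :=
  2 * ∫ s in (0 : ℝ)..amplitude k lam, (-(k ^ 2 / 3) * s ^ 2 +
    √(k ^ 4 * s ^ 4 / 9 + 1 - (lam - k ^ 4) / 3 * s ^ 4)) ^ (-(1 : ℝ) / 2)

theorem strictMonoOn_halfPeriodOfAmplitude (k : ℝ) :
    StrictMonoOn (halfPeriodOfAmplitude k) (Ici 0) :=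
  strictMonoOn_self_mul_of_monotoneOn_Ici
    (monotoneOn_unitHalfPeriod_mul_sq (by positivity)) (unitHalfPeriod_pos _)

theorem bijOn_halfPeriodOfAmplitude (k : ℝ) : BijOn (halfPeriodOfAmplitude k) (Ioi 0) (Ioi 0) :=
  bijOn_self_mul_of_monotoneOn_Ici
    (monotoneOn_unitHalfPeriod_mul_sq (by positivity)) (unitHalfPeriod_pos _)
    (continuous_unitHalfPeriod.comp (by fun_prop)).continuousOn

theorem strictAntiOn_amplitude (k : ℝ) : StrictAntiOn (amplitude k) (Ioi (k ^ 4)) := by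
  intro lam hlam mu hmu h
  have hlam : 0 < lam - k ^ 4 := sub_pos.2 hlam
  have hmu : 0 < mu - k ^ 4 := sub_pos.2 hmu
  unfold amplitude
  gcongr

theorem amplitude_pos {k lam : ℝ} (hlam : k ^ 4 < lam) : 0 < amplitude k lam :=
  Real.rpow_pos_of_pos (div_pos three_pos (sub_pos.2 hlam)) _

theorem amplitude_pow_four {k lam : ℝ} (hlam : k ^ 4 < lam) :
    amplitude k lam ^ 4 = 3 / (lam - k ^ 4) := by
  have hnonneg : 0 ≤ 3 / (lam - k ^ 4) := (div_pos three_pos (sub_pos.2 hlam)).le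
  simpa [amplitude] using Real.rpow_inv_natCast_pow hnonneg four_ne_zero

theorem amplitude_add_three_div_pow (k : ℝ) {R : ℝ} (hR : 0 ≤ R) :
    amplitude k (k ^ 4 + 3 / R ^ 4) = R := by
  simpa [amplitude] using Real.pow_rpow_inv_natCast hR four_ne_zero

theorem bijOn_amplitude (k : ℝ) : BijOn (amplitude k) (Ioi (k ^ 4)) (Ioi 0) := by
  refine ⟨fun lam hlam => amplitude_pos hlam, (strictAntiOn_amplitude k).injOn, fun R hR => ?_⟩
  have hR : 0 < R := hR
  have hlt : k ^ 4 < k ^ 4 + 3 / R ^ 4 := lt_add_of_pos_right _ (by positivity)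
  exact ⟨_, hlt, amplitude_add_three_div_pow k hR.le⟩

theorem halfPeriod_eqOn_comp_amplitude (k : ℝ) :
    EqOn (halfPeriod k) (halfPeriodOfAmplitude k ∘ amplitude k) (Ioi (k ^ 4)) := by
  intro lam hlam
  have hR4 := amplitude_pow_four hlam
  have hsub : lam - k ^ 4 ≠ 0 := (sub_pos.2 hlam).ne'
  simp only [halfPeriod, Function.comp_apply, halfPeriodOfAmplitude]
  set R := amplitude k lam
  have hrescale := intervalIntegral.mul_integral_comp_mul_left (a := 0) (b := 1) (c := R)
    (f := fun s => (-(k ^ 2 / 3) * s ^ 2 +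
      √(k ^ 4 * s ^ 4 / 9 + 1 - (lam - k ^ 4) / 3 * s ^ 4)) ^ (-(1 : ℝ) / 2))
  rw [mul_zero, mul_one] at hrescale
  rw [← hrescale, mul_left_comm, unitHalfPeriod]
  congr 2
  refine intervalIntegral.integral_congr_Ioo_of_le zero_le_one fun t ht => ?_
  have hc : 0 < 1 - t ^ 4 := sub_pos.2 (pow_lt_one₀ ht.1.le ht.2 four_ne_zero)
  have hlinear : -(k ^ 2 / 3) * (R * t) ^ 2 = -(k ^ 2 / 3 * R ^ 2 * t ^ 2) := by ring
  have hradicand : k ^ 4 * (R * t) ^ 4 / 9 + 1 - (lam - k ^ 4) / 3 * (R * t) ^ 4 =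
      (k ^ 2 / 3 * R ^ 2 * t ^ 2) ^ 2 + (1 - t ^ 4) := by
    have hunit : (lam - k ^ 4) / 3 * R ^ 4 = 1 := by rw [hR4]; field_simp
    linear_combination -t ^ 4 * hunit
  simp only [hlinear, hradicand, neg_add_sqrt_rpow_neg_half hc]

theorem strictAntiOn_halfPeriod (k : ℝ) : StrictAntiOn (halfPeriod k) (Ioi (k ^ 4)) :=
  ((strictMonoOn_halfPeriodOfAmplitude k).comp_strictAntiOn (strictAntiOn_amplitude k)
    fun _ hlam => (amplitude_pos hlam).le).congr (halfPeriod_eqOn_comp_amplitude k).symm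

theorem bijOn_halfPeriod (k : ℝ) : BijOn (halfPeriod k) (Ioi (k ^ 4)) (Ioi 0) :=
  (halfPeriod_eqOn_comp_amplitude k).bijOn_iff.2
    ((bijOn_halfPeriodOfAmplitude k).comp (bijOn_amplitude k))

theorem stmt_17_general (pi4 : ℝ → ℝ → ℝ)
    (hpi4 : ∀ lam k : ℝ, k ^ 4 < lam → pi4 lam k =
      2 * ∫ s in (0:ℝ)..((3 / (lam - k ^ 4)) ^ ((1:ℝ)/4)),
        (-(k ^ 2 / 3) * s ^ 2 +
          Real.sqrt (k ^ 4 * s ^ 4 / 9 + 1 - (lam - k ^ 4) / 3 * s ^ 4)) ^ (-(1:ℝ)/2)) (k : ℝ) :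
    (∀ c : ℝ, 0 < c → ∃! lam : ℝ, k ^ 4 < lam ∧ pi4 lam k = c) ∧
      ∀ {ι : Type*} {l : Filter ι} {u : ι → ℝ}, (∀ᶠ i in l, k ^ 4 < u i) →
        Tendsto (fun i => pi4 (u i) k) l (𝓝 0) → Tendsto u l atTop := by
  have heq : EqOn (halfPeriod k) (fun lam => pi4 lam k) (Ioi (k ^ 4)) :=
    fun lam hlam => (hpi4 lam k hlam).symm
  have hbij := heq.bijOn_iff.1 (bijOn_halfPeriod k)
  have hanti := (strictAntiOn_halfPeriod k).congr heq
  exact ⟨fun c hc => existsUnique_of_bijOn hbij hc,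
    tendsto_atTop_of_antitoneOn_Ioi hanti.antitoneOn hbij.mapsTo⟩

/-- For every fixed `k` and every positive integer `n`, the equation
`π₄(λ, k) = 1/n` has a unique solution `λ_n(k) ∈ (k⁴, ∞)`, and `λ_n(k) → +∞`
as `n → ∞`. -/
theorem stmt_17 (pi4 : ℝ → ℝ → ℝ)
    (hpi4 : ∀ lam k : ℝ, k ^ 4 < lam → pi4 lam k =
      2 * ∫ s in (0:ℝ)..((3 / (lam - k ^ 4)) ^ ((1:ℝ)/4)),
        (-(k ^ 2 / 3) * s ^ 2 +
          Real.sqrt (k ^ 4 * s ^ 4 / 9 + 1 - (lam - k ^ 4) / 3 * s ^ 4)) ^ (-(1:ℝ)/2)) :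
    ∀ k : ℝ,
      (∀ n : ℕ, 0 < n → ∃! lam : ℝ, k ^ 4 < lam ∧ pi4 lam k = 1 / n) ∧
      (∀ lamSeq : ℕ → ℝ,
        (∀ n : ℕ, 0 < n → k ^ 4 < lamSeq n ∧ pi4 (lamSeq n) k = 1 / n) →
        Tendsto lamSeq atTop atTop) := by
  intro k
  have hgen := stmt_17_general pi4 hpi4 k
  refine ⟨fun n hn => hgen.1 _ (by positivity), fun lamSeq hseq => hgen.2 ?_ ?_⟩
  · filter_upwards [eventually_gt_atTop 0] with n hn using (hseq n hn).1
  · refine tendsto_one_div_atTop_nhds_zero_nat.congr' ?_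
    filter_upwards [eventually_gt_atTop 0] with n hn using (hseq n hn).2.symm
end
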